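/- arXiv:2211.09417 — 2 statements merged into one kernel-verified Lean document; each statement's English description precedes it below -/
import Mathlib

section
/- A binary word w is a prefix of some lower Christoffel word if and only if w is balanced and prefix normal (with respect to the letter 0). -/
/-- The lower Christoffel word `w_{a,b}`: the binary word of length `a+b` whose
`k`-th letter (1-based) is `⌊kb/(a+b)⌋ - ⌊(k-1)b/(a+b)⌋` (with `false = 0`, `true = 1`). -/
def lowerChristoffel (a b : ℕ) : List Bool :=
  (List.range (a + b)).map fun i => decide ((i + 1) * b / (a + b) ≠ i * b / (a + b))

/-- The upper Christoffel word `W_{a,b}`: the binary word of length `a+b` whose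
`k`-th letter is `⌈kb/(a+b)⌉ - ⌈(k-1)b/(a+b)⌉`. -/
def upperChristoffel (a b : ℕ) : List Bool :=
  (List.range (a + b)).map fun i =>
    decide (((i + 1) * b + (a + b) - 1) / (a + b) ≠ (i * b + (a + b) - 1) / (a + b))

/-- `p` is a period of `w`: `p` is positive and `w_i = w_{i+p}` for all valid indices. -/
def HasPeriod (w : List Bool) (p : ℕ) : Prop :=
  0 < p ∧ ∀ i, i + p < w.length → w.getD i false = w.getD (i + p) false

/-- A central word: a binary word with two coprime periods `p`, `q` and length `p + q - 2`. -/
def IsCentral (w : List Bool) : Prop :=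
  ∃ p q : ℕ, Nat.Coprime p q ∧ HasPeriod w p ∧ HasPeriod w q ∧ w.length + 2 = p + q

/-- A binary word is balanced if any two factors of the same length have numbers of `1`s
differing by at most `1`. -/
def BalancedWord (w : List Bool) : Prop :=
  ∀ u v : List Bool, u <:+: w → v <:+: w → u.length = v.length →
    |(u.count true : ℤ) - (v.count true : ℤ)| ≤ 1

/-- `w^m`: the `m`-th power of the word `w`. -/
def wpow (w : List Bool) (m : ℕ) : List Bool := (List.replicate m w).flatten

/-- A word is primitive if it is not a proper power. -/
def IsPrimitiveWord (w : List Bool) : Prop := ¬ ∃ (v : List Bool) (m : ℕ), 2 ≤ m ∧ w = wpow v m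

/-- A Lyndon word: a nonempty primitive word lexicographically strictly smaller than all
of its proper nonempty suffixes (for the order `0 < 1`, i.e. `false < true`). -/
def IsLyndonWord (w : List Bool) : Prop :=
  w ≠ [] ∧ IsPrimitiveWord w ∧
    ∀ u v : List Bool, w = u ++ v → u ≠ [] → v ≠ [] → List.Lex (· < ·) w v

/-- `p` is the minimal period of `w`. -/
def IsMinPeriod (w : List Bool) (p : ℕ) : Prop :=
  HasPeriod w p ∧ ∀ q : ℕ, HasPeriod w q → p ≤ q

/-- `u` is a factor of the infinite periodic word `w^ω`. -/
def IsOmegaFactor (u w : List Bool) : Prop := ∃ m : ℕ, u <:+: wpow w m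

/-- A primitive Christoffel word: a lower or upper Christoffel word `w_{a,b}` with
`gcd(a,b) = 1`. -/
def IsPrimitiveChristoffel (c : List Bool) : Prop :=
  ∃ a b : ℕ, Nat.Coprime a b ∧ (c = lowerChristoffel a b ∨ c = upperChristoffel a b)

/-- A word is prefix normal (w.r.t. the letter `0`) if no factor has more `0`s than the
prefix of the same length. -/
def PrefixNormal (w : List Bool) : Prop :=
  ∀ u : List Bool, u <:+: w → u.count false ≤ (w.take u.length).count false

/-- number of ones in the prefix of length `k` -/
def onesPrefix (w : List Bool) (k : ℕ) : ℕ := (w.take k).count true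

lemma onesPrefix_succ (w : List Bool) (k : ℕ) (h : k < w.length) :
    onesPrefix w (k + 1) = onesPrefix w k + if w[k] then 1 else 0 := by
  unfold onesPrefix
  rw [← List.take_append_getElem h, List.count_append]
  cases w[k] <;> simp

lemma onesPrefix_zero (w : List Bool) : onesPrefix w 0 = 0 := by simp [onesPrefix]

lemma onesPrefix_le (w : List Bool) (k : ℕ) : onesPrefix w k ≤ k :=
  (List.count_le_length).trans (by simp)

/-- quasi-additivity of the counting function -/
def QuasiAdd (w : List Bool) : Prop :=
  ∀ i k, i + k ≤ w.length → onesPrefix w i + onesPrefix w k ≤ onesPrefix w (i + k) ∧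
    onesPrefix w (i + k) ≤ onesPrefix w i + onesPrefix w k + 1

lemma infix_pos (w u : List Bool) (h : u <:+: w) : ∃ i, i + u.length ≤ w.length ∧
    onesPrefix w (i + u.length) = onesPrefix w i + u.count true := by
  obtain ⟨p, s, rfl⟩ := h
  refine ⟨p.length, by simp, ?_⟩
  unfold onesPrefix
  have h1 : (p ++ u ++ s).take (p.length + u.length) = p ++ u := by
    rw [← List.length_append, List.take_left]
  have h2 : (p ++ u ++ s).take p.length = p := by
    rw [List.append_assoc, List.take_left]
  rw [h1, h2, List.count_append]

lemma pos_infix (w : List Bool) (i k : ℕ) (h : i + k ≤ w.length) :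
    ∃ u, u <:+: w ∧ u.length = k ∧ onesPrefix w (i + k) = onesPrefix w i + u.count true := by
  refine ⟨(w.drop i).take k, ?_, ?_, ?_⟩
  · exact (List.take_prefix _ _).isInfix.trans (List.drop_suffix _ _).isInfix
  · simp; omega
  · unfold onesPrefix
    rw [List.take_add, List.count_append]

lemma count_tf (u : List Bool) : u.count true + u.count false = u.length := by
  induction u with
  | nil => simp
  | cons a t ih => cases a <;> simp <;> omega

lemma quasi_iff (w : List Bool) : QuasiAdd w ↔ (BalancedWord w ∧ PrefixNormal w) := by
  constructor
  · intro h
    refine ⟨?_, ?_⟩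
    · intro u v hu hv huv
      obtain ⟨i, hi, ei⟩ := infix_pos w u hu
      obtain ⟨j, hj, ej⟩ := infix_pos w v hv
      have a1 := h i _ hi
      have a2 := h j _ hj
      rw [← huv] at a2 ej
      rw [abs_le]; omega
    · intro u hu
      obtain ⟨i, hi, ei⟩ := infix_pos w u hu
      have a1 := h i _ hi
      have c1 := count_tf u
      have c2 := count_tf (w.take u.length)
      have : (w.take u.length).length = u.length := by simp; omega
      have e : onesPrefix w u.length = (w.take u.length).count true := rfl
      omega
  · rintro ⟨hb, hp⟩ i k hik
    obtain ⟨u, hu, hl, e⟩ := pos_infix w i k hik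
    have b := hb u (w.take u.length) hu (List.take_prefix _ _).isInfix (by simp; omega)
    have p := hp u hu
    have c1 := count_tf u
    have c2 := count_tf (w.take u.length)
    have : (w.take u.length).length = u.length := by simp; omega
    have e : onesPrefix w u.length = (w.take u.length).count true := rfl
    rw [hl] at *
    rw [abs_le] at b
    omega

lemma christoffel_step (a b k : ℕ) (hab : 0 < a + b) :
    (k + 1) * b / (a + b) = k * b / (a + b) +
      if (decide ((k + 1) * b / (a + b) ≠ k * b / (a + b))) then 1 else 0 := by
  have h1 : k * b / (a + b) ≤ (k + 1) * b / (a + b) := Nat.div_le_div_right (by nlinarith)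
  have h2 : (k + 1) * b / (a + b) ≤ k * b / (a + b) + 1 := by
    rw [← Nat.add_div_right _ hab]
    exact Nat.div_le_div_right (by nlinarith)
  simp only [decide_eq_true_eq]
  split_ifs <;> omega

lemma ones_christoffel (a b k : ℕ) (hab : 0 < a + b) (hk : k ≤ a + b) :
    onesPrefix (lowerChristoffel a b) k = k * b / (a + b) := by
  induction k with
  | zero => simp [onesPrefix_zero]
  | succ k ih =>
    have hl : k < (lowerChristoffel a b).length := by simp [lowerChristoffel]; omega
    rw [onesPrefix_succ _ _ hl, ih (by omega), christoffel_step a b k hab]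
    simp [lowerChristoffel]

lemma prefix_iff (w : List Bool) (a b : ℕ) (hab : 0 < a + b) :
    w <+: lowerChristoffel a b ↔
      w.length ≤ a + b ∧ ∀ k ≤ w.length, onesPrefix w k = k * b / (a + b) := by
  have hL : (lowerChristoffel a b).length = a + b := by simp [lowerChristoffel]
  constructor
  · intro h
    have hl := h.length_le
    rw [hL] at hl
    refine ⟨hl, fun k hk => ?_⟩
    rw [← ones_christoffel a b k hab (by omega)]
    obtain ⟨t, ht⟩ := h
    rw [← ht]
    unfold onesPrefix
    rw [List.take_append_of_le_length hk]
  · rintro ⟨hl, h⟩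
    rw [List.prefix_iff_eq_take]
    apply List.ext_getElem
    · simp [hL, hl]
    · intro k h1 h2
      rw [List.getElem_take]
      have e1 := onesPrefix_succ w k h1
      have e2 := onesPrefix_succ (lowerChristoffel a b) k (by omega)
      rw [ones_christoffel a b _ hab (by omega), ones_christoffel a b _ hab (by omega)] at e2
      rw [h _ (by omega), h _ (by omega)] at e1
      have : (if w[k] then 1 else 0) = if (lowerChristoffel a b)[k] then 1 else 0 := by omega
      revert this
      cases w[k] <;> cases (lowerChristoffel a b)[k] <;> simp

lemma key (w : List Bool) (h : QuasiAdd w) (N : ℕ) : ∀ k l, k + l ≤ N → 0 < k → 0 < l →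
    k ≤ w.length → l ≤ w.length → l * onesPrefix w k < k * (onesPrefix w l + 1) := by
  induction N with
  | zero => intros; omega
  | succ N ih =>
    intro k l hN hk hl hkn hln
    rcases lt_trichotomy k l with hlt | rfl | hlt
    · obtain ⟨d, rfl⟩ := Nat.exists_eq_add_of_lt hlt
      have a1 := ih k (d + 1) (by omega) hk (by omega) hkn (by omega)
      have a2 := (h k (d + 1) (by omega)).1
      rw [← add_assoc] at a2
      nlinarith
    · nlinarith
    · obtain ⟨d, rfl⟩ := Nat.exists_eq_add_of_lt hlt
      have a1 := ih (d + 1) l (by omega) (by omega) hl (by omega) hln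
      have a2 := (h l (d + 1) (by omega)).2
      rw [← add_assoc] at a2
      nlinarith

lemma exists_slope (w : List Bool) (h : QuasiAdd w) (hn : 0 < w.length) :
    ∃ m, 0 < m ∧ m ≤ w.length ∧ ∀ k, 0 < k → k ≤ w.length →
      onesPrefix w k * m ≤ onesPrefix w m * k := by
  obtain ⟨m, hm, hmax⟩ := Finset.exists_max_image (Finset.Icc 1 w.length)
    (fun k => (onesPrefix w k : ℚ) / k) ⟨1, by simp; omega⟩
  rw [Finset.mem_Icc] at hm
  refine ⟨m, hm.1, hm.2, fun k hk hkn => ?_⟩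
  have := hmax k (by rw [Finset.mem_Icc]; omega)
  have hm0 : (0 : ℚ) < m := by exact_mod_cast hm.1
  have hk0 : (0 : ℚ) < k := by exact_mod_cast hk
  rw [div_le_div_iff₀ hk0 hm0] at this
  exact_mod_cast this

/-- A binary word is a prefix of some lower Christoffel word iff it is
balanced and prefix normal. -/
theorem stmt18 (w : List Bool) :
    (∃ a b : ℕ, (a ≠ 0 ∨ b ≠ 0) ∧ w <+: lowerChristoffel a b) ↔
    (BalancedWord w ∧ PrefixNormal w) := by
  rw [← quasi_iff]
  constructor
  · rintro ⟨a, b, hab, hw⟩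
    have hpos : 0 < a + b := by omega
    rw [prefix_iff w a b hpos] at hw
    obtain ⟨-, hw⟩ := hw
    intro i k hik
    rw [hw i (by omega), hw k (by omega), hw (i + k) hik, add_mul]
    refine ⟨Nat.add_div_le_add_div _ _ _, ?_⟩
    rw [Nat.add_div hpos]
    split_ifs <;> omega
  · intro h
    rcases Nat.eq_zero_or_pos w.length with h0 | hn
    · rw [List.length_eq_zero_iff] at h0
      subst h0
      exact ⟨1, 0, by simp, List.nil_prefix⟩
    · obtain ⟨m, hm, hmn, hmax⟩ := exists_slope w h hn
      have hle := onesPrefix_le w m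
      have e : (m - onesPrefix w m) * w.length + onesPrefix w m * w.length = m * w.length := by
        rw [← add_mul, Nat.sub_add_cancel hle]
      have hp : 0 < m * w.length := Nat.mul_pos hm hn
      refine ⟨(m - onesPrefix w m) * w.length, onesPrefix w m * w.length, by omega, ?_⟩
      rw [prefix_iff w _ _ (by omega), e]
      refine ⟨Nat.le_mul_of_pos_left _ hm, fun k hk => ?_⟩
      rw [← mul_assoc, Nat.mul_div_mul_right _ _ hn]
      symm
      rcases Nat.eq_zero_or_pos k with rfl | hk0
      · simp [onesPrefix_zero]
      · have a1 := hmax k hk0 hk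
        have a2 := key w h _ m k le_rfl hm hk0 hmn hk
        rw [Nat.div_eq_iff hm]
        constructor
        · nlinarith
        · rw [Nat.le_sub_one_iff_lt] <;> nlinarith
end

section
/- Let n ≥ 1 and let PLC(n) be the set of binary words of length n that are prefixes of lower Christoffel words. Every v ∈ PLC(n) can be written uniquely as v = w^m·w', where w is a primitive lower Christoffel word, m ≥ 1, and w' is a proper (possibly empty) prefix of w; this w is called the primitive root √v of v. The map v ↦ |√v|_1 / |√v| is a bijection from PLC(n) onto the set of rational numbers h/k with 0 ≤ h ≤ k ≤ n and gcd(h,k) = 1 (the Farey fractions of order n lying in [0,1]), and this map is strictly increasing from the lexicographic order (with 0 < 1) on PLC(n) to the usual order on the rationals. -/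
/-- `PLC n`: the set of binary words of length `n` that are prefixes of lower Christoffel
words. -/
def PLC (n : ℕ) : Set (List Bool) :=
  {v | v.length = n ∧ ∃ a b : ℕ, (a ≠ 0 ∨ b ≠ 0) ∧ v <+: lowerChristoffel a b}

/-- `w` is the primitive root of `v`: `w` is a primitive lower Christoffel word and
`v = w^m · w'` for some `m ≥ 1` and proper (possibly empty) prefix `w'` of `w`. -/
def IsPrimRoot (v w : List Bool) : Prop :=
  (∃ a b : ℕ, Nat.Coprime a b ∧ w = lowerChristoffel a b) ∧
    ∃ (m : ℕ) (w' : List Bool), 1 ≤ m ∧ w' <+: w ∧ w' ≠ w ∧ v = wpow w m ++ w'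

/-- The prefix of length `n` of the infinite mechanical word of slope `q`. -/
def mechWord (q : ℚ) (n : ℕ) : List Bool :=
  (List.range n).map fun i : ℕ => decide (⌊((i + 1 : ℕ) : ℚ) * q⌋₊ ≠ ⌊(i : ℚ) * q⌋₊)

lemma mechWord_length (q : ℚ) (n : ℕ) : (mechWord q n).length = n := by
  simp [mechWord]

lemma mechWord_succ (q : ℚ) (n : ℕ) : mechWord q (n + 1) =
    mechWord q n ++ [decide (⌊((n + 1 : ℕ) : ℚ) * q⌋₊ ≠ ⌊(n : ℚ) * q⌋₊)] := by
  simp [mechWord, List.range_succ]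

lemma mechWord_prefix (q : ℚ) {m n : ℕ} (h : m ≤ n) : mechWord q m <+: mechWord q n := by
  obtain ⟨r, rfl⟩ := Nat.exists_eq_add_of_le h
  unfold mechWord
  rw [List.range_add, List.map_append]
  exact List.prefix_append _ _

lemma eq_mechWord_of_prefix {q : ℚ} {n : ℕ} {v : List Bool} (h : v <+: mechWord q n) :
    v = mechWord q v.length := by
  have h1 : v.length ≤ n := by simpa [mechWord_length] using h.length_le
  have h2 := List.prefix_of_prefix_length_le h (mechWord_prefix q h1)
    (by rw [mechWord_length])
  exact h2.eq_of_length (by rw [mechWord_length])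

lemma lowerChristoffel_eq (a b : ℕ) :
    lowerChristoffel a b = mechWord ((b : ℚ) / ((a + b : ℕ) : ℚ)) (a + b) := by
  unfold lowerChristoffel mechWord
  congr 1
  funext i
  have key : ∀ j : ℕ, ⌊(j : ℚ) * ((b : ℚ) / ((a + b : ℕ) : ℚ))⌋₊ = j * b / (a + b) := by
    intro j
    rw [← mul_div_assoc, ← Nat.cast_mul, Nat.floor_div_eq_div]
  rw [key, key]

lemma mechWord_add {q : ℚ} (hq : 0 ≤ q) {k h : ℕ} (hk : (k : ℚ) * q = h) (r : ℕ) :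
    mechWord q (k + r) = mechWord q k ++ mechWord q r := by
  unfold mechWord
  rw [List.range_add, List.map_append, List.map_map]
  congr 2
  funext i
  have key : ∀ j : ℕ, ⌊((k + j : ℕ) : ℚ) * q⌋₊ = h + ⌊(j : ℚ) * q⌋₊ := by
    intro j
    rw [Nat.cast_add, add_mul, hk, add_comm, Nat.floor_add_natCast (by positivity), add_comm]
  simp only [Function.comp]
  rw [add_assoc, key, key]
  simp

lemma mechWord_mul_add {q : ℚ} (hq : 0 ≤ q) {k h : ℕ} (hk : (k : ℚ) * q = h) (m r : ℕ) :
    mechWord q (k * m + r) = wpow (mechWord q k) m ++ mechWord q r := by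
  induction m with
  | zero => simp [wpow]
  | succ m ih =>
    have : k * (m + 1) + r = k + (k * m + r) := by ring
    rw [this, mechWord_add hq hk, ih]
    simp [wpow, List.replicate_succ]

lemma mechWord_count {q : ℚ} (hq : 0 ≤ q) (hq1 : q ≤ 1) (n : ℕ) :
    (mechWord q n).count true = ⌊(n : ℚ) * q⌋₊ := by
  induction n with
  | zero => simp [mechWord]
  | succ n ih =>
    rw [mechWord_succ, List.count_append, ih]
    have h1 : ⌊(n : ℚ) * q⌋₊ ≤ ⌊((n + 1 : ℕ) : ℚ) * q⌋₊ := by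
      apply Nat.floor_le_floor; push_cast; nlinarith
    have h2 : ⌊((n + 1 : ℕ) : ℚ) * q⌋₊ ≤ ⌊(n : ℚ) * q⌋₊ + 1 := by
      rw [← Nat.floor_add_one (by positivity)]
      apply Nat.floor_le_floor; push_cast; nlinarith
    by_cases h : ⌊((n + 1 : ℕ) : ℚ) * q⌋₊ = ⌊(n : ℚ) * q⌋₊
    · rw [decide_eq_false (by simpa using h)]
      simp only [List.count_singleton]
      simp; push_cast at h; omega
    · rw [decide_eq_true h]
      simp only [List.count_singleton]
      simp; push_cast at h h1 h2; omega

lemma lex_append_of_length {u v : List Bool} (h : List.Lex (· < ·) u v)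
    (hl : u.length = v.length) (s t : List Bool) : List.Lex (· < ·) (u ++ s) (v ++ t) := by
  induction h with
  | nil => simp at hl
  | cons _ ih => exact List.Lex.cons (ih (by simpa using hl))
  | rel h => exact List.Lex.rel h

lemma mechWord_mono {q q' : ℚ} (hq : 0 ≤ q) (hqq : q ≤ q') (hq1 : q' ≤ 1) (n : ℕ) :
    (mechWord q n = mechWord q' n ∧ ∀ i ≤ n, ⌊(i : ℚ) * q⌋₊ = ⌊(i : ℚ) * q'⌋₊) ∨
      List.Lex (· < ·) (mechWord q n) (mechWord q' n) := by
  induction n with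
  | zero => left; simp [mechWord]
  | succ n ih =>
    rw [mechWord_succ, mechWord_succ]
    rcases ih with ⟨h1, h2⟩ | h
    · have h3 := h2 n le_rfl
      by_cases h4 : ⌊((n + 1 : ℕ) : ℚ) * q⌋₊ = ⌊((n + 1 : ℕ) : ℚ) * q'⌋₊
      · left
        rw [h1, h3, h4]
        refine ⟨rfl, fun i hi => ?_⟩
        rcases Nat.lt_or_eq_of_le hi with h | rfl
        · exact h2 i (by omega)
        · exact h4
      · right
        have h5 : ⌊((n + 1 : ℕ) : ℚ) * q⌋₊ ≤ ⌊((n + 1 : ℕ) : ℚ) * q'⌋₊ := by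
          apply Nat.floor_le_floor; gcongr
        have h6 : ⌊(n : ℚ) * q⌋₊ ≤ ⌊((n + 1 : ℕ) : ℚ) * q⌋₊ := by
          apply Nat.floor_le_floor; push_cast; nlinarith
        have h7 : ⌊((n + 1 : ℕ) : ℚ) * q'⌋₊ ≠ ⌊(n : ℚ) * q'⌋₊ := by omega
        rw [h1]
        apply List.Lex.append_left
        by_cases h8 : ⌊((n + 1 : ℕ) : ℚ) * q⌋₊ = ⌊(n : ℚ) * q⌋₊
        · have e1 : decide (⌊((n + 1 : ℕ) : ℚ) * q⌋₊ ≠ ⌊(n : ℚ) * q⌋₊) = false := by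
            simpa using h8
          have e2 : decide (⌊((n + 1 : ℕ) : ℚ) * q'⌋₊ ≠ ⌊(n : ℚ) * q'⌋₊) = true := by
            simpa using h7
          rw [e1, e2]
          exact List.Lex.rel (by decide)
        · have h9 : ⌊((n + 1 : ℕ) : ℚ) * q'⌋₊ ≤ ⌊(n : ℚ) * q'⌋₊ + 1 := by
            rw [← Nat.floor_add_one (by have := hq.trans hqq; positivity)]
            apply Nat.floor_le_floor; push_cast; nlinarith
          omega
    · right
      exact lex_append_of_length h (by simp [mechWord_length]) _ _

lemma den_mul_eq {q : ℚ} (hq : 0 ≤ q) : (q.den : ℚ) * q = (q.num.toNat : ℕ) := by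
  have h1 : ((q.num.toNat : ℕ) : ℤ) = q.num := Int.toNat_of_nonneg (Rat.num_nonneg.mpr hq)
  have h2 : ((q.num.toNat : ℕ) : ℚ) = q.num := by exact_mod_cast h1
  rw [h2, mul_comm, Rat.mul_den_eq_num]

lemma mechWord_lt {q q' : ℚ} {n : ℕ} (hq : 0 ≤ q) (hqq : q < q') (hq1 : q' ≤ 1)
    (hd : q'.den ≤ n) : List.Lex (· < ·) (mechWord q n) (mechWord q' n) := by
  rcases mechWord_mono hq hqq.le hq1 n with ⟨-, h⟩ | h
  · exfalso
    have h1 := h _ hd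
    have hp : (0 : ℚ) < q'.den := by exact_mod_cast q'.den_pos
    rw [den_mul_eq (hq.trans hqq.le), Nat.floor_natCast] at h1
    have h2 : (q'.den : ℚ) * q < (q'.num.toNat : ℕ) := by
      rw [← den_mul_eq (hq.trans hqq.le)]
      exact mul_lt_mul_of_pos_left hqq hp
    have h3 := Nat.floor_le (a := (q'.den : ℚ) * q) (by positivity)
    rw [h1] at h3
    linarith
  · exact h

lemma mechWord_inj {q q' : ℚ} {n : ℕ} (hq : 0 ≤ q) (hq1 : q ≤ 1) (hd : q.den ≤ n)
    (hq' : 0 ≤ q') (hq1' : q' ≤ 1) (hd' : q'.den ≤ n) (h : mechWord q n = mechWord q' n) :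
    q = q' := by
  have irr : ∀ u : List Bool, ¬ List.Lex (· < ·) u u := fun u hu => lt_irrefl u hu
  rcases lt_trichotomy q q' with h1 | h1 | h1
  · have := mechWord_lt hq h1 hq1' hd'
    rw [h] at this
    exact absurd this (irr _)
  · exact h1
  · have := mechWord_lt hq' h1 hq1 hd
    rw [h] at this
    exact absurd this (irr _)

lemma exists_farey {q : ℚ} (hq : 0 ≤ q) (hq1 : q ≤ 1) {n : ℕ} (hn : 1 ≤ n) :
    ∃ q' : ℚ, 0 ≤ q' ∧ q' ≤ 1 ∧ q'.den ≤ n ∧ mechWord q n = mechWord q' n := by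
  obtain ⟨j, hj, hmax⟩ := Finset.exists_max_image (Finset.Icc 1 n)
    (fun i : ℕ => (⌊(i : ℚ) * q⌋₊ : ℚ) / (i : ℚ)) ⟨1, by simp [hn]⟩
  rw [Finset.mem_Icc] at hj
  have hjpos : (0 : ℚ) < j := by exact_mod_cast hj.1
  set q' : ℚ := (⌊(j : ℚ) * q⌋₊ : ℚ) / (j : ℚ) with hq'
  have hle : q' ≤ q := by
    rw [hq', div_le_iff₀ hjpos, mul_comm q]
    exact Nat.floor_le (by positivity)
  have h0 : 0 ≤ q' := by positivity
  refine ⟨q', h0, hle.trans hq1, ?_, ?_⟩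
  · have hdvd : (q'.den : ℤ) ∣ (j : ℤ) := by
      have := Rat.den_dvd (⌊(j : ℚ) * q⌋₊ : ℤ) (j : ℤ)
      rw [Rat.divInt_eq_div] at this
      simp only [Int.cast_natCast] at this
      exact this
    have := Nat.le_of_dvd (by omega) (Int.natCast_dvd_natCast.mp hdvd)
    omega
  · have key : ∀ i ≤ n, ⌊(i : ℚ) * q⌋₊ = ⌊(i : ℚ) * q'⌋₊ := by
      intro i hi
      apply le_antisymm
      · apply Nat.le_floor
        rcases Nat.eq_zero_or_pos i with rfl | hi0
        · simp
        · have h1 := hmax i (by rw [Finset.mem_Icc]; omega)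
          have hi0' : (0 : ℚ) < i := by exact_mod_cast hi0
          rw [div_le_iff₀ hi0'] at h1
          rw [mul_comm (i : ℚ) q']
          exact h1
      · apply Nat.floor_le_floor
        gcongr
    unfold mechWord
    apply List.map_congr_left
    intro i hi
    rw [List.mem_range] at hi
    rw [key i hi.le, key (i + 1) hi]

/-- Basic data of a primitive lower Christoffel word. -/
lemma christoffel_data {a b : ℕ} (hab : Nat.Coprime a b) :
    ∃ q : ℚ, 0 ≤ q ∧ q ≤ 1 ∧ lowerChristoffel a b = mechWord q q.den := by
  have hpos : 0 < a + b := by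
    rcases Nat.eq_zero_or_pos (a + b) with h | h
    · have h1 : a = 0 := by omega
      have h2 : b = 0 := by omega
      subst h1 h2
      simp at hab
    · exact h
  have hpos' : (0 : ℚ) < ((a + b : ℕ) : ℚ) := by exact_mod_cast hpos
  refine ⟨(b : ℚ) / ((a + b : ℕ) : ℚ), by positivity, ?_, ?_⟩
  · rw [div_le_one hpos']; push_cast; linarith [(Nat.cast_nonneg a : (0 : ℚ) ≤ a)]
  · have : ((b : ℚ) / ((a + b : ℕ) : ℚ)).den = a + b := by
      have := Rat.den_div_eq_of_coprime (a := (b : ℤ)) (b := ((a + b : ℕ) : ℤ))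
        (by exact_mod_cast hpos) (by
          simp only [Int.natAbs_natCast]
          rw [Nat.coprime_add_self_right]; exact hab.symm)
      simp only [Int.cast_natCast] at this
      exact Int.natCast_inj.mp this
    rw [this, lowerChristoffel_eq]

lemma christoffel_of_farey {q : ℚ} (hq : 0 ≤ q) (hq1 : q ≤ 1) :
    ∃ a b : ℕ, Nat.Coprime a b ∧ a + b = q.den ∧ q = (b : ℚ) / ((a + b : ℕ) : ℚ) := by
  have hle : q.num.toNat ≤ q.den := by
    have h1 := den_mul_eq hq
    have hp : (0 : ℚ) < q.den := by exact_mod_cast q.den_pos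
    have : ((q.num.toNat : ℕ) : ℚ) ≤ q.den := by rw [← h1]; nlinarith
    exact_mod_cast this
  have hs : (q.den - q.num.toNat) + q.num.toNat = q.den := by omega
  refine ⟨q.den - q.num.toNat, q.num.toNat, ?_, hs, ?_⟩
  · have h1 : Nat.Coprime q.num.toNat q.den := by
      have h2 : q.num.toNat = q.num.natAbs := by
        have := Rat.num_nonneg.mpr hq
        omega
      rw [h2]
      exact q.reduced
    rw [← hs, Nat.coprime_add_self_right] at h1
    exact h1.symm
  · rw [hs, ← den_mul_eq hq]
    have hp : (q.den : ℚ) ≠ 0 := by exact_mod_cast q.den_nz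
    field_simp

lemma mechWord_mem_PLC {q : ℚ} (hq : 0 ≤ q) (hq1 : q ≤ 1) {n : ℕ} (hn : 1 ≤ n) :
    mechWord q n ∈ PLC n := by
  obtain ⟨a, b, hab, hs, hqe⟩ := christoffel_of_farey hq hq1
  have hd := q.den_pos
  refine ⟨mechWord_length _ _, n * a, n * b, ?_, ?_⟩
  · by_contra hc
    push Not at hc
    have h1 : n * (a + b) = 0 := by rw [mul_add]; omega
    have := Nat.mul_pos hn hd
    rw [← hs] at this
    omega
  · rw [lowerChristoffel_eq]
    have h1 : ((n * b : ℕ) : ℚ) / ((n * a + n * b : ℕ) : ℚ) = q := by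
      rw [hqe, ← mul_add]
      push_cast
      have hn' : (n : ℚ) ≠ 0 := by positivity
      rw [mul_div_mul_left _ _ hn']
    rw [h1]
    apply mechWord_prefix
    rw [← mul_add, hs]
    exact Nat.le_mul_of_pos_right _ hd

lemma PLC_farey {n : ℕ} (hn : 1 ≤ n) {v : List Bool} (hv : v ∈ PLC n) :
    ∃ q : ℚ, 0 ≤ q ∧ q ≤ 1 ∧ q.den ≤ n ∧ v = mechWord q n := by
  obtain ⟨hl, a, b, hab, hp⟩ := hv
  rw [lowerChristoffel_eq] at hp
  have h1 := eq_mechWord_of_prefix hp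
  rw [hl] at h1
  rw [h1]
  apply exists_farey _ _ hn
  · positivity
  · apply div_le_one_of_le₀ _ (by positivity)
    push_cast; linarith [(Nat.cast_nonneg a : (0 : ℚ) ≤ a)]

/-- A decomposition determines a Farey fraction, which determines the decomposition. -/
lemma decomp_data {n m : ℕ} {v w w' : List Bool} (hl : v.length = n)
    (hw : ∃ a b : ℕ, Nat.Coprime a b ∧ w = lowerChristoffel a b)
    (hm : 1 ≤ m) (hp : w' <+: w) (hne : w' ≠ w) (hv : v = wpow w m ++ w') :
    ∃ q : ℚ, 0 ≤ q ∧ q ≤ 1 ∧ q.den ≤ n ∧ v = mechWord q n ∧ w = mechWord q q.den ∧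
      m = n / q.den ∧ w' = mechWord q (n % q.den) := by
  obtain ⟨a, b, hab, hw⟩ := hw
  obtain ⟨q, hq, hq1, hc⟩ := christoffel_data hab
  rw [hc] at hw
  rw [hw] at hp hne
  have hw' := eq_mechWord_of_prefix hp
  have hlt : w'.length < q.den := by
    have h1 := hp.length_le
    rw [mechWord_length] at h1
    rcases Nat.lt_or_eq_of_le h1 with h | h
    · exact h
    · rw [h] at hw'
      exact absurd hw' hne
  have hv2 : v = mechWord q (q.den * m + w'.length) := by
    rw [mechWord_mul_add hq (den_mul_eq hq), ← hw', ← hw]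
    exact hv
  have hn : n = q.den * m + w'.length := by
    rw [← hl, hv2, mechWord_length]
  have hd := q.den_pos
  have hdiv : n / q.den = m := by
    rw [hn, Nat.mul_add_div hd, Nat.div_eq_of_lt hlt, add_zero]
  have hmod : n % q.den = w'.length := by
    rw [hn, Nat.mul_add_mod, Nat.mod_eq_of_lt hlt]
  refine ⟨q, hq, hq1, ?_, ?_, hw, hdiv.symm, ?_⟩
  · have := Nat.le_mul_of_pos_right q.den hm
    omega
  · rw [hn]; exact hv2
  · rw [hmod]; exact hw'

lemma root_data {n : ℕ} {v w : List Bool} (hv : v ∈ PLC n) (h : IsPrimRoot v w) :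
    ∃ q : ℚ, 0 ≤ q ∧ q ≤ 1 ∧ q.den ≤ n ∧ v = mechWord q n ∧
      (w.count true : ℚ) / (w.length : ℚ) = q := by
  obtain ⟨hw, m, w', hm, hp, hne, hvw⟩ := h
  obtain ⟨q, hq, hq1, hd, h1, h2, -, -⟩ := decomp_data hv.1 hw hm hp hne hvw
  refine ⟨q, hq, hq1, hd, h1, ?_⟩
  rw [h2, mechWord_count hq hq1, mechWord_length, den_mul_eq hq, Nat.floor_natCast,
    ← den_mul_eq hq]
  have hp : (q.den : ℚ) ≠ 0 := by exact_mod_cast q.den_nz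
  field_simp

/-- Every `v ∈ PLC(n)` has a unique decomposition `v = w^m·w'` (`w` a
primitive lower Christoffel word, `m ≥ 1`, `w'` a proper prefix of `w`), and the map
`v ↦ |√v|₁/|√v|` is an order-preserving bijection from `PLC(n)` (lexicographic order) onto
the Farey fractions of order `n` in `[0,1]`. -/
theorem stmt19 (n : ℕ) (hn : 1 ≤ n) :
    (∀ v ∈ PLC n, ∃! t : List Bool × ℕ × List Bool,
      (∃ a b : ℕ, Nat.Coprime a b ∧ t.1 = lowerChristoffel a b) ∧
        1 ≤ t.2.1 ∧ t.2.2 <+: t.1 ∧ t.2.2 ≠ t.1 ∧ v = wpow t.1 t.2.1 ++ t.2.2) ∧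
    ∀ f : List Bool → List Bool, (∀ v ∈ PLC n, IsPrimRoot v (f v)) →
      Set.BijOn (fun v => ((f v).count true : ℚ) / ((f v).length : ℚ)) (PLC n)
        {q : ℚ | 0 ≤ q ∧ q ≤ 1 ∧ q.den ≤ n} ∧
      ∀ v₁ ∈ PLC n, ∀ v₂ ∈ PLC n, List.Lex (· < ·) v₁ v₂ →
        ((f v₁).count true : ℚ) / ((f v₁).length : ℚ) <
          ((f v₂).count true : ℚ) / ((f v₂).length : ℚ) := by
  refine ⟨?_, ?_⟩
  · intro v hv
    obtain ⟨q, hq, hq1, hd, hvq⟩ := PLC_farey hn hv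
    refine ⟨(mechWord q q.den, n / q.den, mechWord q (n % q.den)), ⟨?_, ?_, ?_, ?_, ?_⟩, ?_⟩
    · obtain ⟨a, b, hab, hs, hqe⟩ := christoffel_of_farey hq hq1
      refine ⟨a, b, hab, ?_⟩
      rw [lowerChristoffel_eq, ← hqe, hs]
    · exact Nat.div_pos hd q.den_pos
    · exact mechWord_prefix q (Nat.mod_lt _ q.den_pos).le
    · intro h
      have := congrArg List.length h
      simp only [mechWord_length] at this
      have := Nat.mod_lt n q.den_pos
      omega
    · simp only
      rw [← mechWord_mul_add hq (den_mul_eq hq), Nat.div_add_mod]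
      exact hvq
    · rintro ⟨w, m, w'⟩ ⟨hw, hm, hp, hne, hvw⟩
      obtain ⟨q', hq', hq1', hd', h1, h2, h3, h4⟩ := decomp_data hv.1 hw hm hp hne hvw
      have : q = q' := mechWord_inj hq hq1 hd hq' hq1' hd' (hvq.symm.trans h1)
      subst this
      simp only at h2 h3 h4
      rw [h2, h3, h4]
  · intro f hf
    refine ⟨⟨?_, ?_, ?_⟩, ?_⟩
    · intro v hv
      obtain ⟨q, hq, hq1, hd, -, h⟩ := root_data hv (hf v hv)
      simp only [h]
      exact ⟨hq, hq1, hd⟩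
    · intro v hv v' hv' he
      obtain ⟨q, hq, hq1, hd, h1, h⟩ := root_data hv (hf v hv)
      obtain ⟨q', hq', hq1', hd', h1', h'⟩ := root_data hv' (hf v' hv')
      simp only [h, h'] at he
      rw [h1, h1', he]
    · rintro q ⟨hq, hq1, hd⟩
      have hv := mechWord_mem_PLC hq hq1 hn
      refine ⟨mechWord q n, hv, ?_⟩
      obtain ⟨q', hq', hq1', hd', h1, h⟩ := root_data hv (hf _ hv)
      simp only [h]
      exact (mechWord_inj hq hq1 hd hq' hq1' hd' h1).symm
    · intro v₁ hv₁ v₂ hv₂ hlex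
      obtain ⟨q, hq, hq1, hd, h1, h⟩ := root_data hv₁ (hf _ hv₁)
      obtain ⟨q', hq', hq1', hd', h1', h'⟩ := root_data hv₂ (hf _ hv₂)
      rw [h, h']
      by_contra hc
      push Not at hc
      rcases hc.lt_or_eq with hlt | heq
      · have h2 := mechWord_lt hq' hlt hq1 hd
        rw [← h1, ← h1'] at h2
        have a1 : v₁ < v₂ := hlex
        have a2 : v₂ < v₁ := h2
        exact lt_asymm a1 a2
      · have a1 : v₁ < v₂ := hlex
        rw [h1, h1', heq] at a1
        exact lt_irrefl _ a1
end
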